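/- Let {ψ_i}_{i=1}^n be an orthonormal basis of ℝ^n with overlap at most K, let 1 ≤ p < ∞ with Hölder conjugate p', and suppose ‖ψ_k‖_p · ‖ψ_k‖_{p'} ≤ M for every k. Let f ∈ ℝ^n, B ≤ n, and let S ⊆ {1,…,n} with |S| = B consist of indices of the B largest values of |⟨f, ψ_k⟩| / ‖ψ_k‖_{p'}. Then ‖f − Σ_{i∈S} ⟨f, ψ_i⟩ ψ_i‖_p ≤ M · K · E, where E = min over B-sparse z of ‖f − Σ_i z_i ψ_i‖_p. -/

import Mathlib

open scoped ENNReal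

/-- Standard inner product on `ℝ^n`. -/
noncomputable def dotp {n : ℕ} (x y : Fin n → ℝ) : ℝ := ∑ j, x j * y j

/-- The `ℓ_p` norm on `ℝ^n`, for `p ∈ [1, ∞]` (extended-real exponent). -/
noncomputable def lpNorm {n : ℕ} (p : ℝ≥0∞) (x : Fin n → ℝ) : ℝ :=
  if p = ∞ then ⨆ j, |x j| else (∑ j, |x j| ^ p.toReal) ^ (1 / p.toReal)

/-- A vector is `B`-sparse if it has at most `B` nonzero components. -/
def Sparse {n : ℕ} (B : ℕ) (z : Fin n → ℝ) : Prop :=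
  ({i | z i ≠ 0} : Set (Fin n)).ncard ≤ B

theorem lpNorm_of_ne_top {n : ℕ} {p : ℝ≥0∞} (hp : p ≠ ∞) (x : Fin n → ℝ) :
    lpNorm p x = (∑ j, |x j| ^ p.toReal) ^ (1 / p.toReal) := if_neg hp

theorem lpNorm_nonneg {n : ℕ} (p : ℝ≥0∞) (x : Fin n → ℝ) : 0 ≤ lpNorm p x := by
  unfold lpNorm
  split_ifs
  · exact Real.iSup_nonneg fun j => abs_nonneg _
  · positivity

theorem lpNorm_rpow {n : ℕ} {p : ℝ≥0∞} (hp1 : 1 ≤ p) (hp : p ≠ ∞) (x : Fin n → ℝ) :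
    lpNorm p x ^ p.toReal = ∑ j, |x j| ^ p.toReal := by
  have hp0 : p.toReal ≠ 0 := (ENNReal.toReal_pos (by positivity) hp).ne'
  rw [lpNorm_of_ne_top hp, one_div, Real.rpow_inv_rpow (by positivity) hp0]

/-- Hölder's inequality, localized to the support of the second vector. -/
theorem abs_dotp_rpow_le {n : ℕ} {p q : ℝ≥0∞} (hp1 : 1 ≤ p) (hptop : p ≠ ∞)
    (hpq : 1 / p + 1 / q = 1) (x y : Fin n → ℝ) :
    |dotp x y| ^ p.toReal ≤
      (∑ j with y j ≠ 0, |x j| ^ p.toReal) * lpNorm q y ^ p.toReal := by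
  have hp0 : 0 < p.toReal := ENNReal.toReal_pos (by positivity) hptop
  have hsupp : |dotp x y| ≤ ∑ j with y j ≠ 0, |x j| * |y j| := by
    unfold dotp
    refine (Finset.abs_sum_le_sum_abs _ _).trans (le_of_eq ?_)
    rw [Finset.sum_filter]
    refine Finset.sum_congr rfl fun j _ => ?_
    by_cases h : y j = 0 <;> simp [h, abs_mul]
  suffices h : |dotp x y| ≤
      (∑ j with y j ≠ 0, |x j| ^ p.toReal) ^ (1 / p.toReal) * lpNorm q y by
    refine (Real.rpow_le_rpow (abs_nonneg _) h hp0.le).trans (le_of_eq ?_)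
    rw [Real.mul_rpow (by positivity) (lpNorm_nonneg _ _), one_div,
      Real.rpow_inv_rpow (by positivity) hp0.ne']
  refine hsupp.trans ?_
  by_cases hq : q = ∞
  · subst hq
    have hp : p = 1 := by simpa using hpq
    subst hp
    simp only [lpNorm, if_true, ENNReal.toReal_one, Real.rpow_one, div_one, Finset.sum_mul]
    exact Finset.sum_le_sum fun j _ => mul_le_mul_of_nonneg_left
      (le_ciSup (f := fun j => |y j|) (Set.finite_range _).bddAbove j) (abs_nonneg _)
  · have hq0 : q ≠ 0 := by
      rintro rfl
      simp at hpq
    have hconj : p.toReal.HolderConjugate q.toReal := by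
      rw [Real.holderConjugate_iff]
      have hsum : p.toReal⁻¹ + q.toReal⁻¹ = 1 := by
        have h := congrArg ENNReal.toReal hpq
        rw [ENNReal.toReal_add (by simp; positivity) (by simp [hq0])] at h
        simpa using h
      have hq' : 0 < q.toReal := ENNReal.toReal_pos hq0 hq
      refine ⟨?_, hsum⟩
      have : p.toReal⁻¹ < 1 := by
        have := inv_pos.2 hq'
        linarith
      exact (inv_lt_one₀ hp0).1 this
    have h := Real.inner_le_Lp_mul_Lq (Finset.univ.filter fun j => y j ≠ 0)
      (fun j => |x j|) (fun j => |y j|) hconj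
    simp only [abs_abs] at h
    refine h.trans (mul_le_mul_of_nonneg_left ?_ (by positivity))
    rw [lpNorm_of_ne_top hq]
    refine Real.rpow_le_rpow (by positivity) ?_ (by positivity)
    exact Finset.sum_le_sum_of_subset_of_nonneg (Finset.subset_univ _)
      fun _ _ _ => by positivity

/-- An orthonormal family of `n` vectors reconstructs every vector of `ℝ^n`. -/
theorem sum_dotp_mul_eq {n : ℕ} {ψ : Fin n → Fin n → ℝ}
    (horth : ∀ i k, dotp (ψ i) (ψ k) = if i = k then (1 : ℝ) else 0)
    (f : Fin n → ℝ) (j : Fin n) : ∑ i, dotp f (ψ i) * ψ i j = f j := by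
  have h1 : Matrix.of ψ * (Matrix.of ψ).transpose = 1 := by
    ext i k
    simpa [Matrix.mul_apply, Matrix.one_apply, dotp] using horth i k
  have h2 := mul_eq_one_comm.1 h1
  have h3 : ∀ k, ∑ i, ψ i k * ψ i j = if k = j then (1 : ℝ) else 0 := fun k => by
    simpa [Matrix.mul_apply, Matrix.one_apply] using congrFun (congrFun h2 k) j
  simp only [dotp, Finset.sum_mul]
  rw [Finset.sum_comm]
  simp only [mul_assoc, ← Finset.mul_sum, h3]
  simp

theorem dotp_sub_sum {n : ℕ} {ψ : Fin n → Fin n → ℝ}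
    (horth : ∀ i k, dotp (ψ i) (ψ k) = if i = k then (1 : ℝ) else 0)
    (f z : Fin n → ℝ) (k : Fin n) :
    dotp (fun j => f j - ∑ i, z i * ψ i j) (ψ k) = dotp f (ψ k) - z k := by
  have h : ∑ j, (∑ i, z i * ψ i j) * ψ k j = z k := by
    simp only [Finset.sum_mul]
    rw [Finset.sum_comm]
    simp only [mul_assoc, ← Finset.mul_sum]
    have h' : ∀ i, ∑ j, ψ i j * ψ k j = if i = k then (1 : ℝ) else 0 := fun i => horth i k
    simp [h']
  simp only [dotp, sub_mul, Finset.sum_sub_distrib, h]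

theorem Finset.sum_le_sum_of_forall_le_of_card_le {ι : Type*} {s t : Finset ι} {w : ι → ℝ}
    (hw : ∀ i, 0 ≤ w i) (hle : ∀ i ∈ s, ∀ k ∈ t, w i ≤ w k) (hcard : s.card ≤ t.card) :
    ∑ i ∈ s, w i ≤ ∑ k ∈ t, w k := by
  rcases s.eq_empty_or_nonempty with rfl | hs
  · simpa using Finset.sum_nonneg fun i _ => hw i
  · obtain ⟨m, hm, hmax⟩ := s.exists_max_image w hs
    calc ∑ i ∈ s, w i ≤ s.card • w m := Finset.sum_le_card_nsmul _ _ _ hmax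
      _ ≤ t.card • w m := nsmul_le_nsmul_left (hw m) hcard
      _ ≤ ∑ k ∈ t, w k := Finset.card_nsmul_le_sum _ _ _ fun k hk => hle m hm k hk

/-- The `w`-mass outside a set of largest values is at most that outside any set of no larger
size. -/
theorem Finset.sum_compl_le_sum_compl {ι : Type*} [Fintype ι] [DecidableEq ι] {S T : Finset ι}
    {w : ι → ℝ} (hw : ∀ i, 0 ≤ w i) (hS : ∀ i ∈ S, ∀ k ∉ S, w k ≤ w i)
    (hcard : T.card ≤ S.card) : ∑ k ∈ Sᶜ, w k ≤ ∑ k ∈ Tᶜ, w k := by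
  have h := Finset.sum_le_sum_of_forall_le_of_card_le (s := T \ S) (t := S \ T) hw
    (fun i hi k hk => hS k (Finset.mem_sdiff.1 hk).1 i (Finset.mem_sdiff.1 hi).2)
    (Finset.card_sdiff_le_card_sdiff_iff.2 hcard)
  have hTS := Finset.sum_inter_add_sum_sdiff T S w
  have hST := Finset.sum_inter_add_sum_sdiff S T w
  have h1 := Finset.sum_add_sum_compl S w
  have h2 := Finset.sum_add_sum_compl T w
  rw [Finset.inter_comm] at hTS
  linarith

theorem lpNorm_pos_of_dotp_self_ne_zero {n : ℕ} {q : ℝ≥0∞} {x : Fin n → ℝ}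
    (hx : dotp x x ≠ 0) : 0 < lpNorm q x := by
  obtain ⟨j, -, hj⟩ := Finset.exists_ne_zero_of_sum_ne_zero hx
  have hj : 0 < |x j| := abs_pos.2 (left_ne_zero_of_mul hj)
  unfold lpNorm
  split_ifs
  · exact hj.trans_le (le_ciSup (f := fun j => |x j|) (Set.finite_range _).bddAbove j)
  · refine Real.rpow_pos_of_pos (lt_of_lt_of_le (Real.rpow_pos_of_pos hj _)
      (Finset.single_le_sum (f := fun j => |x j| ^ q.toReal)
        (fun _ _ => by positivity) (Finset.mem_univ j))) _

/-- For a family with overlap at most `K`, the `ℓ_p` norm of a combination is controlled by the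
`ℓ_p` norms of its terms. -/
theorem sum_abs_sum_rpow_le {n K : ℕ} {ψ : Fin n → Fin n → ℝ}
    (hK : ∀ j : Fin n, (Finset.univ.filter fun i => ψ i j ≠ 0).card ≤ K)
    {r : ℝ} (hr : 1 ≤ r) (c : Fin n → ℝ) (A : Finset (Fin n)) :
    ∑ j, |∑ i ∈ A, c i * ψ i j| ^ r ≤
      (K : ℝ) ^ (r - 1) * ∑ i ∈ A, |c i| ^ r * ∑ j, |ψ i j| ^ r := by
  simp only [Finset.mul_sum]
  rw [Finset.sum_comm]
  refine Finset.sum_le_sum fun j _ => ?_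
  have hA : ∑ i ∈ A, c i * ψ i j = ∑ i ∈ A with ψ i j ≠ 0, c i * ψ i j := by
    rw [Finset.sum_filter]
    refine Finset.sum_congr rfl fun i _ => ?_
    by_cases h : ψ i j = 0 <;> simp [h]
  have hcard : (A.filter fun i => ψ i j ≠ 0).card ≤ K :=
    (Finset.card_le_card (Finset.filter_subset_filter _ (Finset.subset_univ _))).trans (hK j)
  rw [hA, ← Finset.mul_sum]
  calc |∑ i ∈ A with ψ i j ≠ 0, c i * ψ i j| ^ r
      ≤ (∑ i ∈ A with ψ i j ≠ 0, |c i * ψ i j|) ^ r :=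
        Real.rpow_le_rpow (abs_nonneg _) (Finset.abs_sum_le_sum_abs _ _) (by linarith)
    _ ≤ ((A.filter fun i => ψ i j ≠ 0).card : ℝ) ^ (r - 1) *
          ∑ i ∈ A with ψ i j ≠ 0, |c i * ψ i j| ^ r :=
        Real.rpow_sum_le_const_mul_sum_rpow _ _ hr
    _ ≤ (K : ℝ) ^ (r - 1) * ∑ i ∈ A, |c i| ^ r * |ψ i j| ^ r := by
        refine mul_le_mul (Real.rpow_le_rpow (by positivity) (by exact_mod_cast hcard)
          (by linarith)) ?_ (by positivity) (by positivity)
        simp only [abs_mul, Real.mul_rpow (abs_nonneg _) (abs_nonneg _)]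
        exact Finset.sum_le_sum_of_subset_of_nonneg (Finset.filter_subset _ _)
          fun _ _ _ => by positivity

/-- The greedy residual against the residual of a given sparse approximation. -/
theorem lpNorm_greedy_le {n K : ℕ} {ψ : Fin n → Fin n → ℝ}
    (horth : ∀ i k, dotp (ψ i) (ψ k) = if i = k then (1 : ℝ) else 0)
    (hK : ∀ j : Fin n, (Finset.univ.filter fun i => ψ i j ≠ 0).card ≤ K)
    {p q : ℝ≥0∞} (hp1 : 1 ≤ p) (hptop : p ≠ ∞) (hpq : 1 / p + 1 / q = 1)
    {M : ℝ} (hM0 : 0 ≤ M) (hM : ∀ k, lpNorm p (ψ k) * lpNorm q (ψ k) ≤ M)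
    (f : Fin n → ℝ) {S : Finset (Fin n)}
    (hS : ∀ i ∈ S, ∀ k ∉ S,
      |dotp f (ψ k)| / lpNorm q (ψ k) ≤ |dotp f (ψ i)| / lpNorm q (ψ i))
    {z : Fin n → ℝ} (hz : (Finset.univ.filter fun i => z i ≠ 0).card ≤ S.card) :
    lpNorm p (fun j => f j - ∑ i ∈ S, dotp f (ψ i) * ψ i j) ≤
      M * K * lpNorm p (fun j => f j - ∑ i, z i * ψ i j) := by
  have hr : 1 ≤ p.toReal := by
    simpa using ENNReal.toReal_mono hptop hp1
  have hpos : ∀ k, 0 < lpNorm q (ψ k) := fun k =>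
    lpNorm_pos_of_dotp_self_ne_zero (by simp [horth])
  set r := p.toReal
  set e : Fin n → ℝ := fun j => f j - ∑ i, z i * ψ i j with he
  have hres : (fun j => f j - ∑ i ∈ S, dotp f (ψ i) * ψ i j) =
      fun j => ∑ i ∈ Sᶜ, dotp f (ψ i) * ψ i j := by
    funext j
    have h := Finset.sum_add_sum_compl S fun i => dotp f (ψ i) * ψ i j
    rw [sum_dotp_mul_eq horth f j] at h
    linarith
  set w : Fin n → ℝ := fun k => (|dotp f (ψ k)| / lpNorm q (ψ k)) ^ r with hw
  have hterm : ∀ k, |dotp f (ψ k)| ^ r * ∑ j, |ψ k j| ^ r ≤ M ^ r * w k := fun k => by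
    rw [← lpNorm_rpow hp1 hptop, ← Real.mul_rpow (abs_nonneg _) (lpNorm_nonneg _ _), hw,
      ← Real.mul_rpow hM0 (div_nonneg (abs_nonneg _) (hpos k).le)]
    refine Real.rpow_le_rpow (mul_nonneg (abs_nonneg _) (lpNorm_nonneg _ _)) ?_ (by linarith)
    rw [← mul_div_assoc, le_div_iff₀ (hpos k), mul_assoc, mul_comm M]
    exact mul_le_mul_of_nonneg_left (hM k) (abs_nonneg _)
  have hw0 : ∀ k, 0 ≤ w k := fun k =>
    Real.rpow_nonneg (div_nonneg (abs_nonneg _) (hpos k).le) _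
  have hwz : ∀ k ∈ (Finset.univ.filter fun i => z i ≠ 0)ᶜ,
      w k ≤ ∑ j with ψ k j ≠ 0, |e j| ^ r := fun k hk => by
    have hzk : z k = 0 := by simpa using hk
    have hd : dotp e (ψ k) = dotp f (ψ k) := by
      rw [he, dotp_sub_sum horth, hzk, sub_zero]
    rw [hw]
    simp only
    rw [Real.div_rpow (abs_nonneg _) (hpos k).le,
      div_le_iff₀ (Real.rpow_pos_of_pos (hpos k) _), ← hd]
    exact abs_dotp_rpow_le hp1 hptop hpq _ _
  have hoverlap : ∑ k, ∑ j with ψ k j ≠ 0, |e j| ^ r ≤ K * ∑ j, |e j| ^ r := by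
    simp only [Finset.sum_filter, Finset.mul_sum]
    rw [Finset.sum_comm]
    refine Finset.sum_le_sum fun j _ => ?_
    rw [← Finset.sum_filter, Finset.sum_const, nsmul_eq_mul]
    exact mul_le_mul_of_nonneg_right (by exact_mod_cast hK j) (by positivity)
  have hsum : ∑ k ∈ Sᶜ, w k ≤ K * ∑ j, |e j| ^ r := by
    refine (Finset.sum_compl_le_sum_compl hw0 (fun i hi k hk => ?_) hz).trans
      ((Finset.sum_le_sum hwz).trans ((Finset.sum_le_sum_of_subset_of_nonneg
        (Finset.subset_univ _) fun _ _ _ => by positivity).trans hoverlap))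
    exact Real.rpow_le_rpow (div_nonneg (abs_nonneg _) (hpos k).le) (hS i hi k hk)
      (by linarith)
  have hKr : (K : ℝ) ^ (r - 1) * K = (K : ℝ) ^ r := by
    rcases Nat.eq_zero_or_pos K with h0 | h0
    · rw [h0, Nat.cast_zero, mul_zero, Real.zero_rpow (by linarith)]
    · have h0 : (0 : ℝ) < K := by exact_mod_cast h0
      rw [Real.rpow_sub_one h0.ne', div_mul_cancel₀ _ h0.ne']
  rw [hres, ← Real.rpow_le_rpow_iff (z := r) (lpNorm_nonneg _ _)
    (mul_nonneg (by positivity) (lpNorm_nonneg _ _)) (by linarith),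
    Real.mul_rpow (by positivity) (lpNorm_nonneg _ _), Real.mul_rpow hM0 (by positivity),
    lpNorm_rpow hp1 hptop, lpNorm_rpow hp1 hptop]
  calc ∑ j, |∑ i ∈ Sᶜ, dotp f (ψ i) * ψ i j| ^ r
      ≤ (K : ℝ) ^ (r - 1) * ∑ k ∈ Sᶜ, |dotp f (ψ k)| ^ r * ∑ j, |ψ k j| ^ r :=
        sum_abs_sum_rpow_le hK hr _ _
    _ ≤ (K : ℝ) ^ (r - 1) * (M ^ r * (K * ∑ j, |e j| ^ r)) := by
        refine mul_le_mul_of_nonneg_left ?_ (by positivity)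
        refine (Finset.sum_le_sum fun k _ => hterm k).trans ?_
        rw [← Finset.mul_sum]
        exact mul_le_mul_of_nonneg_left hsum (by positivity)
    _ = M ^ r * (K : ℝ) ^ r * ∑ j, |e j| ^ r := by
        rw [← hKr]
        ring

/-- let `{ψ_i}` be an orthonormal basis of `ℝ^n` with overlap at most `K`,
`1 ≤ p < ∞` with Hölder conjugate `q`, and `‖ψ_k‖_p · ‖ψ_k‖_q ≤ M` for every `k`.
Let `f ∈ ℝ^n`, `B ≤ n`, and let `S` be a set of `B` indices of the `B` largest values
of `|⟨f, ψ_k⟩| / ‖ψ_k‖_q`.  Then `‖f − Σ_{i∈S} ⟨f, ψ_i⟩ ψ_i‖_p ≤ M · K · E`, where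
`E` is the minimum over `B`-sparse `z` of `‖f − Σ_i z_i ψ_i‖_p`. -/
theorem stmt7 {n B K : ℕ} (ψ : Fin n → Fin n → ℝ)
    (horth : ∀ i k, dotp (ψ i) (ψ k) = if i = k then (1 : ℝ) else 0)
    (hK : ∀ j : Fin n, ({i | ψ i j ≠ 0} : Set (Fin n)).ncard ≤ K)
    (p q : ℝ≥0∞) (hp1 : 1 ≤ p) (hptop : p ≠ ∞) (hpq : 1 / p + 1 / q = 1)
    (M : ℝ) (hM : ∀ k, lpNorm p (ψ k) * lpNorm q (ψ k) ≤ M)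
    (f : Fin n → ℝ) (hB : B ≤ n)
    (S : Finset (Fin n)) (hcard : S.card = B)
    (hS : ∀ i ∈ S, ∀ k ∉ S,
      |dotp f (ψ k)| / lpNorm q (ψ k) ≤ |dotp f (ψ i)| / lpNorm q (ψ i)) :
    lpNorm p (fun j => f j - ∑ i ∈ S, dotp f (ψ i) * ψ i j) ≤
      M * (K : ℝ) *
        sInf {e : ℝ | ∃ z : Fin n → ℝ, Sparse B z ∧
          e = lpNorm p (fun j => f j - ∑ i, z i * ψ i j)} := by
  have hncard : ∀ P : Fin n → Prop, ∀ [DecidablePred P],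
      ({i | P i} : Set (Fin n)).ncard = (Finset.univ.filter P).card := fun P _ => by
    rw [← Set.ncard_coe_finset, Finset.coe_filter]
    simp
  rcases Nat.eq_zero_or_pos n with rfl | hn
  · have h0 : ∀ x : Fin 0 → ℝ, lpNorm p x = 0 := fun x => by
      have hp0 : p.toReal ≠ 0 := (ENNReal.toReal_pos (by positivity) hptop).ne'
      rw [lpNorm_of_ne_top hptop]
      simp [hp0]
    have hset : {e : ℝ | ∃ z : Fin 0 → ℝ, Sparse B z ∧ e = 0} = {0} := by
      ext e
      simp [Sparse]
    simp only [h0]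
    rw [hset, csInf_singleton, mul_zero]
  · have hM0 : 0 ≤ M :=
      (mul_nonneg (lpNorm_nonneg _ _) (lpNorm_nonneg _ _)).trans (hM ⟨0, hn⟩)
    have hmain : ∀ e ∈ {e : ℝ | ∃ z : Fin n → ℝ, Sparse B z ∧
        e = lpNorm p (fun j => f j - ∑ i, z i * ψ i j)},
        lpNorm p (fun j => f j - ∑ i ∈ S, dotp f (ψ i) * ψ i j) ≤ M * K * e := by
      rintro _ ⟨z, hz, rfl⟩
      refine lpNorm_greedy_le horth (fun j => ?_) hp1 hptop hpq hM0 hM f hS ?_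
      · rw [← hncard]
        exact hK j
      · rw [← hncard, hcard]
        exact hz
    have hne : {e : ℝ | ∃ z : Fin n → ℝ, Sparse B z ∧
        e = lpNorm p (fun j => f j - ∑ i, z i * ψ i j)}.Nonempty :=
      ⟨_, 0, by simp [Sparse], rfl⟩
    rcases (mul_nonneg hM0 (Nat.cast_nonneg K)).eq_or_lt with h0 | h0
    · obtain ⟨e, he⟩ := hne
      have := hmain e he
      rwa [← h0, zero_mul] at this ⊢
    · rw [← div_le_iff₀' h0]
      exact le_csInf hne fun e he => (div_le_iff₀' h0).2 (hmain e he)
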